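/- Let n be a positive natural number, U a real n × n matrix, and b : Fin n → ℝ. Define Φ : (Fin n → ℝ) → (Fin n → ℝ) by Φ(u)(i) = σ((U · u + b)(i)) · tanh(u(i)), where σ(x) = 1/(1 + exp(−x)). Set C = max_i (Σ_j |U_{ij}| + |b(i)|). Then for any initial state u₀ and the iterates u_t = Φ^[t](u₀), one has |u_{t}(i)| ≤ σ(C)^{t−1} · |u_1(i)| for all t ≥ 1 and all components i; since 0 < σ(C) < 1, the trajectory converges geometrically to zero. -/

import Mathlib

theorem sinh_le_mul_cosh_aux {x : ℝ} (hx : 0 ≤ x) : Real.sinh x ≤ x * Real.cosh x := by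
  have hd : ∀ y : ℝ, HasDerivAt (fun y => y * Real.cosh y - Real.sinh y) (y * Real.sinh y) y := by
    intro y
    have h := ((hasDerivAt_id y).mul (Real.hasDerivAt_cosh y)).sub (Real.hasDerivAt_sinh y)
    exact HasDerivAt.congr_deriv h (by simp only [id]; ring)
  have hm : MonotoneOn (fun y : ℝ => y * Real.cosh y - Real.sinh y) (Set.Ici 0) := by
    apply monotoneOn_of_deriv_nonneg (convex_Ici 0)
    · exact fun y _ => (hd y).continuousAt.continuousWithinAt
    · exact fun y _ => (hd y).differentiableAt.differentiableWithinAt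
    · intro y hy
      rw [interior_Ici] at hy
      rw [(hd y).deriv]
      have hy' : 0 ≤ y := le_of_lt hy
      exact mul_nonneg hy' (Real.sinh_nonneg_iff.mpr hy')
  have h := hm (Set.mem_Ici.mpr le_rfl) (Set.mem_Ici.mpr hx) hx
  simp at h
  linarith

theorem abs_tanh_le_abs_aux (x : ℝ) : |Real.tanh x| ≤ |x| := by
  have key : ∀ y : ℝ, 0 ≤ y → |Real.tanh y| ≤ |y| := by
    intro y hy
    have hc := Real.cosh_pos y
    rw [Real.tanh_eq_sinh_div_cosh, abs_of_nonneg hy,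
      abs_of_nonneg (div_nonneg (Real.sinh_nonneg_iff.mpr hy) hc.le), div_le_iff₀ hc]
    exact sinh_le_mul_cosh_aux hy
  rcases le_total 0 x with h | h
  · exact key x h
  · have := key (-x) (by linarith)
    simpa [Real.tanh_neg] using this

theorem abs_tanh_le_one_aux (x : ℝ) : |Real.tanh x| ≤ 1 := by
  have h := Real.tanh_bijOn.mapsTo (Set.mem_univ x)
  exact abs_le.mpr ⟨h.1.le, h.2.le⟩

/-- Quantitative version of Lemma 2 of the paper: with
`C = max_i (∑_j |U i j| + |b i|)`, the iterates of the CFN-induced system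
`Φ(u)(i) = σ((U·u + b)(i)) * tanh(u(i))` satisfy
`|u_t(i)| ≤ σ(C)^(t-1) * |u_1(i)|` for all `t ≥ 1`; since `0 < σ(C) < 1`,
the trajectory converges geometrically to zero. -/
theorem cfn_geometric_convergence (n : ℕ) (hn : 0 < n)
    (U : Matrix (Fin n) (Fin n) ℝ) (b : Fin n → ℝ)
    (Φ : (Fin n → ℝ) → (Fin n → ℝ))
    (hΦ : ∀ u i, Φ u i = (1 / (1 + Real.exp (-(U.mulVec u + b) i))) * Real.tanh (u i))
    (C : ℝ)
    (hC : C = Finset.univ.sup'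
      (Finset.univ_nonempty_iff.mpr (Fin.pos_iff_nonempty.mp hn))
      (fun i => (∑ j, |U i j|) + |b i|))
    (u₀ : Fin n → ℝ) :
    (∀ t, 1 ≤ t → ∀ i,
        |Φ^[t] u₀ i| ≤ (1 / (1 + Real.exp (-C))) ^ (t - 1) * |Φ^[1] u₀ i|) ∧
      0 < 1 / (1 + Real.exp (-C)) ∧ 1 / (1 + Real.exp (-C)) < 1 ∧
      Filter.Tendsto (fun t => Φ^[t] u₀) Filter.atTop (nhds 0) := by
  have hs : ∀ x : ℝ, 1 / (1 + Real.exp (-x)) = Real.sigmoid x := by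
    intro x
    rw [Real.sigmoid_def, one_div]
  rw [hs C]
  have hΦ' : ∀ u i, Φ u i = Real.sigmoid ((U.mulVec u + b) i) * Real.tanh (u i) := by
    intro u i
    rw [← hs]
    exact hΦ u i
  have h1 : ∀ u i, |Φ u i| ≤ 1 := by
    intro u i
    rw [hΦ', abs_mul, abs_of_pos (Real.sigmoid_pos _)]
    exact mul_le_one₀ (Real.sigmoid_le_one _) (abs_nonneg _) (abs_tanh_le_one_aux _)
  have h2 : ∀ u : Fin n → ℝ, (∀ i, |u i| ≤ 1) → ∀ i, |Φ u i| ≤ Real.sigmoid C * |u i| := by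
    intro u hu i
    rw [hΦ', abs_mul, abs_of_pos (Real.sigmoid_pos _)]
    refine mul_le_mul (Real.sigmoid_le ?_) (abs_tanh_le_abs_aux _) (abs_nonneg _)
      (Real.sigmoid_nonneg _)
    have h3 : (∑ j, |U i j|) + |b i| ≤ C := by
      rw [hC]
      exact Finset.le_sup' (fun i => (∑ j, |U i j|) + |b i|) (Finset.mem_univ i)
    refine le_trans ?_ h3
    rw [Pi.add_apply]
    refine add_le_add ?_ (le_abs_self _)
    change ∑ j, U i j * u j ≤ _
    refine Finset.sum_le_sum fun j _ => ?_
    refine (le_abs_self _).trans ?_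
    rw [abs_mul]
    exact mul_le_of_le_one_right (abs_nonneg _) (hu j)
  have main : ∀ k i, |Φ^[k + 1] u₀ i| ≤ Real.sigmoid C ^ k * |Φ^[1] u₀ i| := by
    intro k
    induction k with
    | zero => intro i; simp
    | succ k ih =>
      intro i
      rw [Function.iterate_succ_apply']
      refine (h2 _ (fun j => ?_) i).trans ?_
      · rw [Function.iterate_succ_apply']
        exact h1 _ j
      · rw [pow_succ', mul_assoc]
        exact mul_le_mul_of_nonneg_left (ih i) (Real.sigmoid_nonneg _)
  refine ⟨?_, Real.sigmoid_pos _, Real.sigmoid_lt_one _, ?_⟩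
  · intro t ht i
    obtain ⟨k, rfl⟩ : ∃ k, t = k + 1 := ⟨t - 1, by omega⟩
    simpa using main k i
  · rw [← Filter.tendsto_add_atTop_iff_nat 1, tendsto_pi_nhds]
    intro i
    refine squeeze_zero_norm (fun k => main k i) ?_
    simpa using (tendsto_pow_atTop_nhds_zero_of_lt_one (Real.sigmoid_nonneg C)
      (Real.sigmoid_lt_one C)).mul_const (|Φ^[1] u₀ i|)
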